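/- arXiv:2510.12261 — 2 statements merged into one kernel-verified Lean document; each statement's English description precedes it below -/
import Mathlib

section
/- One has det(λ·C) = 1. Moreover det(U) = 1 if r > 3, and det(U) = θ if r = 3. -/
/-!
For a primitive additive character `ψ` of a finite commutative ring of odd order `n`, orthogonality
of characters turns the square of the matrix `(ψ (i * j))` into `n` times the permutation matrix of
negation, which fixes only `0`. Hence `det ^ 2 = n ^ n * (-1) ^ ((n - 1) / 2)`, and raising this to
the power `(n - 1) / 2` expresses `det ^ (n - 1)` through `n`; this is what fixes the scalar `λ`.

The determinant of the diagonal matrix is `θ ^ S` with `S = ∑ k (k + r) / 2`. Writing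
`r = 2 * k + 1`, one has `3 * S = r * (k * (5 * k + 2))`, so `r ∣ S` unless `3 ∣ r`, in which case
`S ≡ r / 3` modulo `r`.
-/

open Finset Matrix

section NegSign

variable {G : Type*} [AddGroup G]

theorem fixedPoints_neg_of_odd_card (hG : Odd (Nat.card G)) :
    Function.fixedPoints (Equiv.neg G) = {0} := by
  have hcop : (Nat.card G).Coprime 2 := Nat.coprime_two_right.mpr hG
  ext x
  rw [Function.mem_fixedPoints, Function.IsFixedPt, Equiv.neg_apply, neg_eq_iff_add_eq_zero,
    ← two_nsmul, Set.mem_singleton_iff]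
  exact hcop.nsmul_right_bijective.injective.eq_iff' (nsmul_zero 2)

theorem sign_neg_of_odd_card [Fintype G] [DecidableEq G] (hG : Odd (Fintype.card G)) :
    Equiv.Perm.sign (Equiv.neg G) = (-1) ^ ((Fintype.card G - 1) / 2) := by
  have hsq : (Equiv.neg G : Equiv.Perm G) ^ 2 = 1 := by
    ext x
    simp [pow_two]
  have hfix : Fintype.card (Function.fixedPoints (Equiv.neg G)) = 1 := by
    rw [← Nat.card_eq_fintype_card] at hG
    rw [← Nat.card_eq_fintype_card, fixedPoints_neg_of_odd_card hG, Nat.card_unique]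
  rw [Equiv.Perm.sign_of_pow_two_eq_one hsq, hfix]

end NegSign

section FourierMatrix

variable {R : Type*} [CommRing R]

/-- The (unnormalised) Fourier matrix `(ψ (i * j))` of a ring `R` with respect to an additive
character `ψ`, with rows and columns indexed by the elements of `R`. -/
def fourierMatrix {S : Type*} [Monoid S] (ψ : AddChar R S) : Matrix R R S :=
  of fun i j => ψ (i * j)

variable [Fintype R] [DecidableEq R]

theorem fourierMatrix_mul_self {S : Type*} [CommRing S] [IsDomain S] {ψ : AddChar R S}
    (hψ : ψ.IsPrimitive) :
    fourierMatrix ψ * fourierMatrix ψ =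
      (Fintype.card R : S) • (Equiv.neg R).permMatrix S := by
  ext i j
  calc (fourierMatrix ψ * fourierMatrix ψ) i j = ∑ k, ψ (k * (i + j)) := by
        simp only [mul_apply, fourierMatrix, of_apply, ← AddChar.map_add_eq_mul]
        exact sum_congr rfl fun k _ => by ring_nf
    _ = if i + j = 0 then (Fintype.card R : S) else 0 := by
        rw [AddChar.sum_mulShift _ hψ, Nat.cast_ite, Nat.cast_zero]
    _ = ((Fintype.card R : S) • (Equiv.neg R).permMatrix S) i j := by
        simp [Equiv.Perm.permMatrix, PEquiv.toMatrix_apply, neg_eq_iff_add_eq_zero]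

theorem det_fourierMatrix_sq {S : Type*} [CommRing S] [IsDomain S] {ψ : AddChar R S}
    (hψ : ψ.IsPrimitive) (hR : Odd (Fintype.card R)) :
    (fourierMatrix ψ).det ^ 2 =
      (Fintype.card R : S) ^ Fintype.card R * (-1) ^ ((Fintype.card R - 1) / 2) := by
  rw [sq, ← det_mul, fourierMatrix_mul_self hψ, det_smul, det_permutation,
    sign_neg_of_odd_card hR]
  simp

theorem det_fourierMatrix_pow_card_sub_one {S : Type*} [CommRing S] [IsDomain S]
    {ψ : AddChar R S} (hψ : ψ.IsPrimitive) (hR : Odd (Fintype.card R)) :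
    (fourierMatrix ψ).det ^ (Fintype.card R - 1) =
      ((-(Fintype.card R : S)) ^ ((Fintype.card R - 1) / 2)) ^ Fintype.card R := by
  have hsq := det_fourierMatrix_sq hψ hR
  have htwo : Fintype.card R - 1 = 2 * ((Fintype.card R - 1) / 2) := by grind
  generalize Fintype.card R = n at *
  set k := (n - 1) / 2
  have hsign : ((-1 : S) ^ k) ^ k = ((-1) ^ k) ^ n := by
    rcases Nat.even_or_odd k with hk | hk
    · simp [hk.neg_one_pow]
    · simp [hk.neg_one_pow, hR.neg_one_pow]
  calc (fourierMatrix ψ).det ^ (n - 1) = ((n : S) ^ n * (-1) ^ k) ^ k := by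
        rw [htwo, pow_mul, hsq]
    _ = ((-1) ^ k) ^ n * ((n : S) ^ k) ^ n := by
        rw [mul_pow, hsign, pow_right_comm, mul_comm]
    _ = ((-(n : S)) ^ k) ^ n := by rw [← mul_pow, ← neg_pow]

variable {F : Type*} [Field F] {ψ : AddChar R F}

theorem det_fourierMatrix_ne_zero (hψ : ψ.IsPrimitive) : (fourierMatrix ψ).det ≠ 0 := by
  have hrows : LinearIndependent F (fourierMatrix ψ).row :=
    (linearIndependent_monoidHom (Multiplicative R) F).comp
      (fun i => (ψ.mulShift i).toMonoidHom)
      (AddChar.toMonoidHomEquiv.injective.comp (AddChar.to_mulShift_inj_of_isPrimitive hψ))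
  exact ((isUnit_iff_isUnit_det _).mp (linearIndependent_rows_iff_isUnit.mp hrows)).ne_zero

theorem det_smul_fourierMatrix_eq_one (hψ : ψ.IsPrimitive) (hR : Odd (Fintype.card R)) :
    (((-(Fintype.card R : F)) ^ ((Fintype.card R - 1) / 2) * (fourierMatrix ψ).det⁻¹) •
      fourierMatrix ψ).det = 1 := by
  have hdet := det_fourierMatrix_ne_zero hψ
  rw [det_smul, mul_pow, ← det_fourierMatrix_pow_card_sub_one hψ hR, inv_pow, mul_right_comm,
    pow_sub_one_mul Fintype.card_ne_zero, mul_inv_cancel₀ (pow_ne_zero _ hdet)]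

end FourierMatrix

section QuadraticExponentSum

theorem twelve_mul_sum_range_mul_add_div_two {m : ℕ} (hm : Odd m) (n : ℕ) :
    12 * ∑ k ∈ range (n + 1), k * (k + m) / 2 = n * (n + 1) * (2 * n + 1 + 3 * m) := by
  induction n with
  | zero => simp
  | succ n ih =>
    have heven : 2 ∣ (n + 1) * (n + 1 + m) := by
      rw [← even_iff_two_dvd]
      grind
    obtain ⟨c, hc⟩ := heven
    rw [sum_range_succ, mul_add, ih, hc, Nat.mul_div_cancel_left _ two_pos]
    linarith

theorem three_mul_sum_range_mul_add_div_two (k : ℕ) :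
    3 * ∑ j ∈ range (2 * k + 1), j * (j + (2 * k + 1)) / 2 =
      (2 * k + 1) * (k * (5 * k + 2)) := by
  have h := twelve_mul_sum_range_mul_add_div_two (odd_two_mul_add_one k) (2 * k)
  linarith

theorem dvd_sum_range_mul_add_div_two {r : ℕ} (hr : Odd r) (h3 : ¬ 3 ∣ r) :
    r ∣ ∑ k ∈ range r, k * (k + r) / 2 := by
  have hcop : r.Coprime 3 := ((Nat.prime_three.coprime_iff_not_dvd).mpr h3).symm
  obtain ⟨k, rfl⟩ := hr
  exact hcop.dvd_of_dvd_mul_left (three_mul_sum_range_mul_add_div_two k ▸ dvd_mul_right _ _)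

theorem sum_range_mul_add_div_two_modEq {r : ℕ} (hr : Odd r) (h3 : 3 ∣ r) :
    ∑ k ∈ range r, k * (k + r) / 2 ≡ r / 3 [MOD r] := by
  obtain ⟨j, rfl⟩ : ∃ j, r = 2 * (3 * j + 1) + 1 := ⟨r / 6, by grind⟩
  have hsum := three_mul_sum_range_mul_add_div_two (3 * j + 1)
  have hdiv : (2 * (3 * j + 1) + 1) / 3 = 2 * j + 1 := by omega
  have hrem : ∑ k ∈ range (2 * (3 * j + 1) + 1), k * (k + (2 * (3 * j + 1) + 1)) / 2 =
      (2 * (3 * j + 1) + 1) * (15 * j ^ 2 + 12 * j + 2) + (2 * j + 1) := by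
    linarith
  rw [hrem, hdiv]
  simp [Nat.ModEq]

end QuadraticExponentSum

theorem sum_zmod_val_eq_sum_range {M : Type*} [AddCommMonoid M] {r : ℕ} [NeZero r] (f : ℕ → M) :
    ∑ x : ZMod r, f x.val = ∑ k ∈ range r, f k := by
  obtain ⟨n, rfl⟩ := Nat.exists_eq_succ_of_ne_zero (NeZero.ne r)
  exact Fin.sum_univ_eq_sum_range f (n + 1)

theorem det_diagonal_pow_val {S : Type*} [CommRing S] {r : ℕ} [NeZero r] (a : S) (f : ℕ → ℕ) :
    (diagonal fun x : ZMod r => a ^ f x.val).det = a ^ ∑ k ∈ range r, f k := by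
  rw [det_diagonal, prod_pow_eq_pow_sum, sum_zmod_val_eq_sum_range]

theorem weil_det_lamC_and_detU_general
    {r : ℕ} [NeZero r] (hr : Odd r)
    {𝔽 : Type*} [Field 𝔽] {θ : 𝔽} (hθ : IsPrimitiveRoot θ r)
    (C : Matrix (ZMod r) (ZMod r) 𝔽)
    (hC : ∀ i j : ZMod r, C i j = θ ^ (i * j).val)
    (U : Matrix (ZMod r) (ZMod r) 𝔽)
    (hU : U = Matrix.diagonal fun ξ : ZMod r => θ ^ (ξ.val * (ξ.val + r) / 2))
    (lam : 𝔽) (hlam : lam = (-(r : 𝔽)) ^ ((r - 1) / 2) * C.det⁻¹) :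
    (lam • C).det = 1 ∧ (¬ 3 ∣ r → U.det = 1) ∧ (3 ∣ r → U.det = θ ^ (r / 3)) := by
  have hCψ : C = fourierMatrix (AddChar.zmodChar r hθ.pow_eq_one) := by
    ext i j
    rw [hC, fourierMatrix, of_apply, AddChar.zmodChar_apply]
  have hdetU : U.det = θ ^ ∑ k ∈ range r, k * (k + r) / 2 := by
    rw [hU]
    exact det_diagonal_pow_val θ fun k => k * (k + r) / 2
  refine ⟨?_, fun h3 => ?_, fun h3 => ?_⟩
  · have hψ := AddChar.zmodChar_primitive_of_primitive_root r hθ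
    rw [hlam, hCψ]
    simpa only [ZMod.card] using det_smul_fourierMatrix_eq_one hψ ((ZMod.card r).symm ▸ hr)
  · rw [hdetU, hθ.pow_eq_one_iff_dvd]
    exact dvd_sum_range_mul_add_div_two hr h3
  · rw [hdetU]
    exact pow_eq_pow_of_modEq (sum_range_mul_add_div_two_modEq hr h3) hθ.pow_eq_one

/-- `det(λC) = 1`; `det(U) = 1` if `r > 3` and `det(U) = θ` if `r = 3`. -/
theorem weil_det_lamC_and_detU
    {r : ℕ} [Fact (Nat.Prime r)] (hr : Odd r)
    {𝔽 : Type*} [Field 𝔽] {θ : 𝔽} (hθ : IsPrimitiveRoot θ r)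
    (C : Matrix (ZMod r) (ZMod r) 𝔽)
    (hC : ∀ i j : ZMod r, C i j = θ ^ (i * j).val)
    (U : Matrix (ZMod r) (ZMod r) 𝔽)
    (hU : U = Matrix.diagonal fun ξ : ZMod r => θ ^ (ξ.val * (ξ.val + r) / 2))
    (lam : 𝔽) (hlam : lam = (-(r : 𝔽)) ^ ((r - 1) / 2) * C.det⁻¹) :
    (lam • C).det = 1 ∧ (3 < r → U.det = 1) ∧ (r = 3 → U.det = θ) := by
  obtain ⟨hdetC, hdetU, hdetU₃⟩ := weil_det_lamC_and_detU_general hr hθ C hC U hU lam hlam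
  refine ⟨hdetC, fun h => hdetU ?_, fun h => by simpa [h] using hdetU₃ h.symm.dvd⟩
  exact (Nat.prime_dvd_prime_iff_eq Nat.prime_three Fact.out).not.mpr h.ne
end

section
/- The centralizer of σ in R is exactly the subgroup generated by the scalar unit θ·I: an element x ∈ R satisfies x·σ = σ·x if and only if x = θ^k·I for some k. -/
/-! The group `R` lies in the Heisenberg group of `G = (ZMod r) ^ ℓ`, whose elements are the
matrices `W(c, b, ψ)` sending the basis vector at `ξ` to `c ψ(ξ)` times the one at `ξ + b`.
Conjugating by `σ` replaces `W(c, b, ψ)` by `W(c, -b, ψ⁻¹)`. The parameters are determined by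
the matrix, so `W(c, b, ψ)` commutes with `σ` exactly when `b = -b` and `ψ = ψ⁻¹`. As `G` has
odd order, this means `b = 0` and `ψ = 1`, leaving the scalar `c`, which is a power of `θ`. -/

section OddOrder

variable {G : Type*} [AddCommGroup G]

theorem nsmul_two_bijective_of_odd_card (hG : Odd (Nat.card G)) :
    Function.Bijective fun g : G ↦ 2 • g :=
  (nsmulCoprime (Nat.coprime_two_right.2 hG)).bijective

theorem neg_eq_self_iff_of_odd_card (hG : Odd (Nat.card G)) {g : G} : -g = g ↔ g = 0 := by
  rw [neg_eq_iff_add_eq_zero, ← two_nsmul]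
  exact (nsmul_two_bijective_of_odd_card hG).injective.eq_iff' (smul_zero 2)

theorem addChar_inv_eq_self_iff_of_odd_card {M : Type*} [CommGroup M] (hG : Odd (Nat.card G))
    {ψ : AddChar G M} : ψ⁻¹ = ψ ↔ ψ = 1 := by
  refine ⟨fun hψ ↦ ?_, fun hψ ↦ by rw [hψ, inv_one]⟩
  ext g
  obtain ⟨h, rfl⟩ := (nsmul_two_bijective_of_odd_card hG).surjective g
  calc ψ (2 • h) = ψ h * ψ⁻¹ h := by rw [hψ, two_nsmul, AddChar.map_add_eq_mul]
    _ = 1 := by rw [AddChar.inv_apply', mul_inv_cancel]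

end OddOrder

section WeylMatrix

variable {G K : Type*} [AddCommGroup G] [DecidableEq G] [CommSemiring K]

/-- The Weyl operator with scalar `c`, translation `b` and modulation `ψ`: as an operator on column
vectors it sends the basis vector at `ξ` to `c * ψ ξ` times the basis vector at `ξ + b`. -/
def weylMatrix (c : Kˣ) (b : G) (ψ : AddChar G Kˣ) : Matrix G G K :=
  Matrix.of fun η ξ ↦ if η = ξ + b then ((c * ψ ξ : Kˣ) : K) else 0

theorem weylMatrix_apply (c : Kˣ) (b : G) (ψ : AddChar G Kˣ) (η ξ : G) :
    weylMatrix c b ψ η ξ = if η = ξ + b then ((c * ψ ξ : Kˣ) : K) else 0 :=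
  rfl

theorem weylMatrix_zero_eq_diagonal (c : Kˣ) (ψ : AddChar G Kˣ) :
    weylMatrix c 0 ψ = Matrix.diagonal fun ξ ↦ ((c * ψ ξ : Kˣ) : K) := by
  ext η ξ
  by_cases h : η = ξ <;> simp [weylMatrix_apply, h]

theorem weylMatrix_zero_one (c : Kˣ) : weylMatrix c (0 : G) 1 = (c : K) • 1 := by
  simp [weylMatrix_zero_eq_diagonal, Matrix.smul_one_eq_diagonal]

theorem weylMatrix_mul [Fintype G] (c c' : Kˣ) (b b' : G) (ψ ψ' : AddChar G Kˣ) :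
    weylMatrix c b ψ * weylMatrix c' b' ψ' =
      weylMatrix (c * c' * ψ b') (b + b') (ψ * ψ') := by
  ext η ξ
  have hscalar : c * ψ (ξ + b') * (c' * ψ' ξ) = c * c' * ψ b' * (ψ * ψ') ξ := by
    simp only [AddChar.map_add_eq_mul, AddChar.mul_apply, mul_assoc, mul_comm, mul_left_comm]
  rw [Matrix.mul_apply, Finset.sum_eq_single (ξ + b') (by simp +contextual [weylMatrix_apply])
    (by simp)]
  simp only [weylMatrix_apply, if_true, ite_mul, zero_mul, ← Units.val_mul, hscalar, add_assoc,
    add_comm b' b]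

theorem weylMatrix_inj [Nontrivial K] {c c' : Kˣ} {b b' : G} {ψ ψ' : AddChar G Kˣ} :
    weylMatrix c b ψ = weylMatrix c' b' ψ' ↔ c = c' ∧ b = b' ∧ ψ = ψ' := by
  refine ⟨fun h ↦ ?_, by rintro ⟨rfl, rfl, rfl⟩; rfl⟩
  have hentry (ξ : G) : ((c * ψ ξ : Kˣ) : K) = if b = b' then ((c' * ψ' ξ : Kˣ) : K) else 0 := by
    simpa only [weylMatrix_apply, if_true, add_right_inj] using congrFun₂ h (ξ + b) ξ
  have hb : b = b' := by
    by_contra hb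
    exact (c * ψ 0).ne_zero (by rw [hentry, if_neg hb])
  simp only [if_pos hb, Units.val_inj] at hentry
  have hc : c = c' := by simpa using hentry 0
  exact ⟨hc, hb, DFunLike.ext _ _ fun ξ ↦ mul_left_cancel (hc ▸ hentry ξ)⟩

variable [Fintype G]

theorem weylMatrix_mul_permMatrix_neg (c : Kˣ) (b : G) (ψ : AddChar G Kˣ) :
    weylMatrix c b ψ * (Equiv.neg G).permMatrix K =
      (Equiv.neg G).permMatrix K * weylMatrix c (-b) ψ⁻¹ := by
  rw [PEquiv.mul_toMatrix_toPEquiv, PEquiv.toMatrix_toPEquiv_mul]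
  ext η ξ
  simp [weylMatrix_apply, neg_eq_iff_eq_neg, add_comm]

theorem commute_weylMatrix_permMatrix_neg_iff [Nontrivial K] (hG : Odd (Nat.card G))
    {c : Kˣ} {b : G} {ψ : AddChar G Kˣ} :
    Commute (weylMatrix c b ψ) ((Equiv.neg G).permMatrix K) ↔ b = 0 ∧ ψ = 1 := by
  have hunit : IsUnit ((Equiv.neg G).permMatrix K) := by
    refine .of_mul_eq_one ((Equiv.neg G).permMatrix K) ?_
    rw [PEquiv.toMatrix_toPEquiv_mul]
    ext η ξ
    simp [Matrix.one_apply]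
  rw [commute_iff_eq, weylMatrix_mul_permMatrix_neg, hunit.mul_right_inj, weylMatrix_inj,
    neg_eq_self_iff_of_odd_card hG, addChar_inv_eq_self_iff_of_odd_card hG]
  exact and_iff_right rfl

variable (G) in
/-- The Heisenberg group of `G` with coefficients in a group `H` of scalars: the invertible matrices
that are Weyl operators whose scalar and modulation take values in `H`. -/
def heisenbergGroup (H : Subgroup Kˣ) : Subgroup (Matrix G G K)ˣ where
  carrier := {x | ∃ c ∈ H, ∃ (b : G) (ψ : AddChar G Kˣ), (∀ ξ, ψ ξ ∈ H) ∧
    (x : Matrix G G K) = weylMatrix c b ψ}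
  one_mem' := ⟨1, H.one_mem, 0, 1, fun _ ↦ H.one_mem, by simp [weylMatrix_zero_one]⟩
  mul_mem' := by
    rintro x y ⟨c, hc, b, ψ, hψ, hx⟩ ⟨c', hc', b', ψ', hψ', hy⟩
    exact ⟨c * c' * ψ b', mul_mem (mul_mem hc hc') (hψ b'), b + b', ψ * ψ',
      fun ξ ↦ mul_mem (hψ ξ) (hψ' ξ), by rw [Units.val_mul, hx, hy, weylMatrix_mul]⟩
  inv_mem' := by
    rintro x ⟨c, hc, b, ψ, hψ, hx⟩
    refine ⟨c⁻¹ * ψ b, mul_mem (inv_mem hc) (hψ b), -b, ψ⁻¹, fun ξ ↦ hψ (-ξ), ?_⟩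
    apply Units.inv_eq_of_mul_eq_one_right
    have hscalar : c * (c⁻¹ * ψ b) * ψ (-b) = 1 := by
      rw [mul_inv_cancel_left, ← AddChar.map_add_eq_mul, add_neg_cancel, AddChar.map_zero_eq_one]
    rw [hx, weylMatrix_mul, hscalar, add_neg_cancel, mul_inv_cancel, weylMatrix_zero_one,
      Units.val_one, one_smul]

theorem mem_heisenbergGroup {H : Subgroup Kˣ} {x : (Matrix G G K)ˣ} :
    x ∈ heisenbergGroup G H ↔ ∃ c ∈ H, ∃ (b : G) (ψ : AddChar G Kˣ), (∀ ξ, ψ ξ ∈ H) ∧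
      (x : Matrix G G K) = weylMatrix c b ψ :=
  Iff.rfl

theorem commute_permMatrix_neg_iff_of_mem_heisenbergGroup [Nontrivial K]
    (hG : Odd (Nat.card G)) {H : Subgroup Kˣ} {x : (Matrix G G K)ˣ}
    (hx : x ∈ heisenbergGroup G H) :
    Commute (x : Matrix G G K) ((Equiv.neg G).permMatrix K) ↔
      ∃ c ∈ H, (x : Matrix G G K) = (c : K) • 1 := by
  constructor
  · obtain ⟨c, hc, b, ψ, -, hx⟩ := mem_heisenbergGroup.1 hx
    rw [hx, commute_weylMatrix_permMatrix_neg_iff hG]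
    rintro ⟨rfl, rfl⟩
    exact ⟨c, hc, weylMatrix_zero_one c⟩
  · rintro ⟨c, -, hx⟩
    rw [hx]
    exact (Commute.one_left _).smul_left _

end WeylMatrix

section Generators

theorem eq_add_single_iff {ι M : Type*} [DecidableEq ι] [AddZeroClass M] {η ξ : ι → M} {t : ι}
    {m : M} : η = ξ + Pi.single t m ↔ η t = ξ t + m ∧ ∀ i, i ≠ t → η i = ξ i := by
  refine ⟨?_, fun ⟨ht, hne⟩ ↦ funext fun i ↦ ?_⟩
  · rintro rfl
    exact ⟨by simp, fun i hi ↦ by simp [hi]⟩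
  · obtain rfl | hi := eq_or_ne i t
    · simp [ht]
    · simp [hi, hne i hi]

variable {ι : Type*} [Fintype ι] [DecidableEq ι] {K : Type*} [CommSemiring K] {t : ι}

theorem mem_heisenbergGroup_of_eq_diagonal_pow {r : ℕ} [NeZero r] {θ : Kˣ} (hθ : θ ^ r = 1)
    {x : (Matrix (ι → ZMod r) (ι → ZMod r) K)ˣ}
    (hx : (x : Matrix (ι → ZMod r) (ι → ZMod r) K) =
      Matrix.diagonal fun ξ ↦ (θ : K) ^ (ξ t).val) :
    x ∈ heisenbergGroup (ι → ZMod r) (Subgroup.zpowers θ) := by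
  let ψ : AddChar (ι → ZMod r) Kˣ :=
    (AddChar.zmodChar r hθ).compAddMonoidHom (Pi.evalAddMonoidHom _ t)
  have hψ (ξ : ι → ZMod r) : ψ ξ = θ ^ (ξ t).val := rfl
  refine mem_heisenbergGroup.2 ⟨1, one_mem _, 0, ψ, fun ξ ↦ ?_, ?_⟩
  · exact hψ ξ ▸ Subgroup.npow_mem_zpowers θ _
  · simp [hx, weylMatrix_zero_eq_diagonal, hψ]

theorem mem_heisenbergGroup_of_coordinate_shift {A : Type*} [AddCommGroup A] [DecidableEq A]
    [Fintype A] {H : Subgroup Kˣ} {a : A} {x : (Matrix (ι → A) (ι → A) K)ˣ}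
    (hx : ∀ η ξ, (x : Matrix (ι → A) (ι → A) K) η ξ =
      if η t = ξ t + a ∧ ∀ i, i ≠ t → η i = ξ i then 1 else 0) :
    x ∈ heisenbergGroup (ι → A) H := by
  refine mem_heisenbergGroup.2 ⟨1, one_mem _, Pi.single t a, 1, fun _ ↦ one_mem _, ?_⟩
  ext η ξ
  simp [hx, weylMatrix_apply, eq_add_single_iff]

end Generators

theorem weil_centralizer_sigma_general
    {r : ℕ} [NeZero r] (hr : Odd r) {K : Type*} [CommSemiring K] [Nontrivial K]
    {θ : K} (hθ : θ ^ r = 1) {ι : Type*} [Fintype ι] [DecidableEq ι]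
    (uA uB : ι → (Matrix (ι → ZMod r) (ι → ZMod r) K)ˣ)
    (huA : ∀ t, (uA t : Matrix (ι → ZMod r) (ι → ZMod r) K) =
      Matrix.diagonal fun ξ ↦ θ ^ (ξ t).val)
    (huB : ∀ t η ξ, (uB t : Matrix (ι → ZMod r) (ι → ZMod r) K) η ξ =
      if η t = ξ t + 1 ∧ ∀ i, i ≠ t → η i = ξ i then 1 else 0)
    (σ : (Matrix (ι → ZMod r) (ι → ZMod r) K)ˣ)
    (hσ : ∀ η ξ, (σ : Matrix (ι → ZMod r) (ι → ZMod r) K) η ξ = if η = -ξ then 1 else 0) :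
    ∀ x ∈ Subgroup.closure (Set.range uA ∪ Set.range uB), (x * σ = σ * x ↔
      ∃ k : ℕ, (x : Matrix (ι → ZMod r) (ι → ZMod r) K) = θ ^ k • 1) := by
  intro x hx
  obtain ⟨u, rfl⟩ : IsUnit θ := .of_pow_eq_one hθ hr.pos.ne'
  have hu : u ^ r = 1 := Units.ext (by simpa using hθ)
  have hle : Subgroup.closure (Set.range uA ∪ Set.range uB) ≤
      heisenbergGroup (ι → ZMod r) (Subgroup.zpowers u) := by
    rw [Subgroup.closure_le, Set.union_subset_iff, Set.range_subset_iff, Set.range_subset_iff]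
    exact ⟨fun t ↦ mem_heisenbergGroup_of_eq_diagonal_pow hu (huA t),
      fun t ↦ mem_heisenbergGroup_of_coordinate_shift (huB t)⟩
  have hσ' : (σ : Matrix (ι → ZMod r) (ι → ZMod r) K) = (Equiv.neg _).permMatrix K := by
    ext η ξ
    simp [hσ, eq_neg_iff_add_eq_zero, neg_eq_iff_add_eq_zero]
  have hcard : Odd (Nat.card (ι → ZMod r)) := by simpa using hr.pow
  have hpow (c : Kˣ) : c ∈ Subgroup.zpowers u ↔ ∃ k : ℕ, u ^ k = c :=
    (isOfFinOrder_iff_pow_eq_one.2 ⟨r, hr.pos, hu⟩).mem_powers_iff_mem_zpowers.symm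
  rw [← Units.val_inj, Units.val_mul, Units.val_mul, hσ', ← commute_iff_eq,
    commute_permMatrix_neg_iff_of_mem_heisenbergGroup hcard (hle hx)]
  simp [hpow]

/-- The centralizer of `σ` in `R` is exactly `⟨θ·I⟩`. -/
theorem weil_centralizer_sigma
    {r : ℕ} [Fact (Nat.Prime r)] (hr : Odd r)
    {𝔽 : Type*} [Field 𝔽] {θ : 𝔽} (hθ : IsPrimitiveRoot θ r)
    {ℓ : ℕ} (hℓ : 1 ≤ ℓ)
    (uA uB : Fin ℓ → (Matrix (Fin ℓ → ZMod r) (Fin ℓ → ZMod r) 𝔽)ˣ)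
    (huA : ∀ t, (uA t : Matrix (Fin ℓ → ZMod r) (Fin ℓ → ZMod r) 𝔽)
      = Matrix.diagonal fun ξ => θ ^ (ξ t).val)
    (huB : ∀ t η ξ, (uB t : Matrix (Fin ℓ → ZMod r) (Fin ℓ → ZMod r) 𝔽) η ξ
      = if η t = ξ t + 1 ∧ ∀ i, i ≠ t → η i = ξ i then 1 else 0)
    (σ : (Matrix (Fin ℓ → ZMod r) (Fin ℓ → ZMod r) 𝔽)ˣ)
    (hσ : ∀ η ξ, (σ : Matrix (Fin ℓ → ZMod r) (Fin ℓ → ZMod r) 𝔽) η ξ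
      = if η = -ξ then 1 else 0)
    (R : Subgroup (Matrix (Fin ℓ → ZMod r) (Fin ℓ → ZMod r) 𝔽)ˣ)
    (hR : R = Subgroup.closure (Set.range uA ∪ Set.range uB)) :
    ∀ x ∈ R, (x * σ = σ * x ↔
      ∃ k : ℕ, (x : Matrix (Fin ℓ → ZMod r) (Fin ℓ → ZMod r) 𝔽) = θ ^ k • 1) := by
  subst hR
  exact weil_centralizer_sigma_general hr hθ.pow_eq_one uA uB huA
    (fun t η ξ ↦ by convert huB t η ξ) σ hσ
end
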